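/- arXiv:2004.02722 — 4 statements merged into one kernel-verified Lean document; each statement's English description precedes it below -/
import Mathlib

section
/- Let X and Q be real Hilbert spaces, and let a : X × X → ℝ and b : X × Q → ℝ be bilinear forms. Assume there exist positive constants α, C, D, β such that: (i) a(u,u) ≥ α‖u‖_X² for all u ∈ X; (ii) |a(u,v)| ≤ C‖u‖_X ‖v‖_X for all u,v ∈ X; (iii) |b(u,μ)| ≤ D‖u‖_X ‖μ‖_Q for all u ∈ X, μ ∈ Q; (iv) sup_{v ∈ X, v ≠ 0} b(v,μ)/‖v‖_X ≥ β‖μ‖_Q for all μ ∈ Q. Then for every pair of continuous linear functionals c : X → ℝ and d : Q → ℝ there exists a unique pair (u, λ) ∈ X × Q such that a(u,v) + b(v,λ) = c(v) for all v ∈ X and b(u,μ) = d(μ) for all μ ∈ Q. -/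
/-!
The argument is a Schur complement reduction. Let `A : X → X` and `T : Q → X` be the Riesz
representatives of `a` and `b`, so that `⟪A u, v⟫ = a u v` and `⟪T μ, v⟫ = b v μ`. By Lax–Milgram
`A` is invertible, so the first equation reads `u = A⁻¹ (c - T λ)`, and the second becomes
`T† A⁻¹ T λ = T† A⁻¹ c - d`. The inf-sup condition says `β ‖μ‖ ≤ ‖T μ‖` (`infsup_norm_le`);
hence, with `w = A⁻¹ T μ`,
`⟪T† A⁻¹ T μ, μ⟫ = a w w ≥ α ‖w‖² ≥ α (‖T μ‖ / C)² ≥ α (β / C)² ‖μ‖²`,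
so the Schur complement is coercive as well, and a second use of Lax–Milgram gives `λ`.
For uniqueness, the difference `(w, ν)` of two solutions satisfies `a w w = 0`, so `w = 0`,
then `T ν = 0`, so `ν = 0`.
-/

open scoped InnerProductSpace

/-- Applied to `f = b(·, μ)` with Riesz representative `t = T μ`, this turns the inf-sup condition
into a lower bound for `‖T μ‖`. The bound
`0 ≤ ‖t‖` covers the case `X = {0}`, where the supremum is the junk value `sSup ∅ = 0`. -/
lemma infsup_norm_le {X : Type*} [NormedAddCommGroup X] [InnerProductSpace ℝ X]
    (f : X → ℝ) (t : X) (ht : ∀ v, ⟪t, v⟫_ℝ = f v) :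
    sSup {r : ℝ | ∃ v : X, v ≠ 0 ∧ r = f v / ‖v‖} ≤ ‖t‖ := by
  refine Real.sSup_le ?_ (norm_nonneg t)
  rintro r ⟨v, hv, rfl⟩
  rw [div_le_iff₀ (norm_pos_iff.mpr hv), ← ht v]
  exact real_inner_le_norm t v

/-- **Relaxed Brezzi conditions imply well-posedness of the saddle point problem.**
Let `X` and `Q` be real Hilbert spaces, `a : X × X → ℝ` and `b : X × Q → ℝ` bilinear
forms such that `a` is coercive on `X` and bounded, `b` is bounded, and `b` satisfies
the inf-sup condition.  Then for all continuous linear functionals `c : X → ℝ` and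
`d : Q → ℝ` there exists a unique pair `(u, λ)` with
`a u v + b v λ = c v` for all `v` and `b u μ = d μ` for all `μ`. -/
theorem saddle_point_wellposed
    {X Q : Type*}
    [NormedAddCommGroup X] [InnerProductSpace ℝ X] [CompleteSpace X]
    [NormedAddCommGroup Q] [InnerProductSpace ℝ Q] [CompleteSpace Q]
    (a : X →ₗ[ℝ] X →ₗ[ℝ] ℝ) (b : X →ₗ[ℝ] Q →ₗ[ℝ] ℝ)
    (α C D β : ℝ) (hα : 0 < α) (hC : 0 < C) (hD : 0 < D) (hβ : 0 < β)
    (hcoer : ∀ u : X, α * ‖u‖ ^ 2 ≤ a u u)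
    (habd : ∀ u v : X, |a u v| ≤ C * ‖u‖ * ‖v‖)
    (hbbd : ∀ (u : X) (μ : Q), |b u μ| ≤ D * ‖u‖ * ‖μ‖)
    (hinfsup : ∀ μ : Q, β * ‖μ‖ ≤ sSup {r : ℝ | ∃ v : X, v ≠ 0 ∧ r = b v μ / ‖v‖})
    (c : X →L[ℝ] ℝ) (d : Q →L[ℝ] ℝ) :
    ∃! p : X × Q, (∀ v : X, a p.1 v + b v p.2 = c v) ∧ (∀ μ : Q, b p.1 μ = d μ) := by
  -- Riesz representatives of the two forms
  let a' : X →L[ℝ] X →L[ℝ] ℝ := a.mkContinuous₂ C habd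
  have ha' : ∀ u v, a' u v = a u v := fun u v => rfl
  have hco : IsCoercive a' := ⟨α, hα, fun u => by
    rw [ha']; have := hcoer u; nlinarith⟩
  let A : X ≃L[ℝ] X := hco.continuousLinearEquivOfBilin
  have hA : ∀ u v, ⟪A u, v⟫_ℝ = a u v := fun u v =>
    hco.continuousLinearEquivOfBilin_apply u v
  let b' : Q →L[ℝ] X →L[ℝ] ℝ := b.flip.mkContinuous₂ D (fun μ u => by
    have := hbbd u μ
    rw [LinearMap.flip_apply, Real.norm_eq_abs]; linarith)
  -- `toDual` is conjugate-linear, so over `ℝ` linearity of `T` is checked by hand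
  let T : Q →L[ℝ] X :=
    { toFun := fun μ => (InnerProductSpace.toDual ℝ X).symm (b' μ)
      map_add' := fun μ ν => by simp only [map_add]
      map_smul' := fun r μ => by simp
      cont := (InnerProductSpace.toDual ℝ X).symm.continuous.comp b'.continuous }
  have hT : ∀ μ v, ⟪T μ, v⟫_ℝ = b v μ := fun μ v =>
    InnerProductSpace.toDual_symm_apply (𝕜 := ℝ) (x := v) (y := b' μ)
  have hTlow : ∀ μ, β * ‖μ‖ ≤ ‖T μ‖ := fun μ =>
    (hinfsup μ).trans (infsup_norm_le (fun v => b v μ) (T μ) (hT μ))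
  have hAup : ∀ w, ‖A w‖ ≤ C * ‖w‖ := fun w => by
    have h1 : ‖A w‖ * ‖A w‖ ≤ C * ‖w‖ * ‖A w‖ := by
      rw [← real_inner_self_eq_norm_mul_norm, hA]
      exact (le_abs_self _).trans (habd w (A w))
    rcases (norm_nonneg (A w)).eq_or_lt with h0 | h0
    · rw [← h0]; positivity
    · exact le_of_mul_le_mul_right h1 h0
  -- the Schur complement and its bilinear form
  let S : Q →L[ℝ] Q := T.adjoint ∘L (A.symm : X →L[ℝ] X) ∘L T
  have hS : ∀ l μ, ⟪S l, μ⟫_ℝ = ⟪A.symm (T l), T μ⟫_ℝ := fun l μ =>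
    ContinuousLinearMap.adjoint_inner_left T μ (A.symm (T l))
  let s : Q →L[ℝ] Q →L[ℝ] ℝ := (innerSL ℝ) ∘L S
  have hs : ∀ l μ, s l μ = ⟪S l, μ⟫_ℝ := fun l μ => rfl
  have hsco : IsCoercive s := by
    refine ⟨α * (β / C) ^ 2, by positivity, fun μ => ?_⟩
    have h1 : β / C * ‖μ‖ ≤ ‖A.symm (T μ)‖ := by
      have h2 := hAup (A.symm (T μ))
      rw [A.apply_symm_apply] at h2
      rw [div_mul_eq_mul_div, div_le_iff₀ hC]
      linarith [hTlow μ]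
    have h3 : s μ μ = a (A.symm (T μ)) (A.symm (T μ)) := by
      rw [hs, hS, ← hA, A.apply_symm_apply, real_inner_comm]
    rw [h3]
    refine le_trans ?_ (hcoer _)
    have h4 : (β / C * ‖μ‖) ^ 2 ≤ ‖A.symm (T μ)‖ ^ 2 := by gcongr
    calc α * (β / C) ^ 2 * ‖μ‖ * ‖μ‖ = α * (β / C * ‖μ‖) ^ 2 := by ring
      _ ≤ _ := by gcongr
  let c' : X := (InnerProductSpace.toDual ℝ X).symm c
  have hc' : ∀ v, ⟪c', v⟫_ℝ = c v := fun v => InnerProductSpace.toDual_symm_apply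
  let d' : Q := (InnerProductSpace.toDual ℝ Q).symm d
  have hd' : ∀ μ, ⟪d', μ⟫_ℝ = d μ := fun μ => InnerProductSpace.toDual_symm_apply
  obtain ⟨l, hl⟩ := hsco.continuousLinearEquivOfBilin.surjective
    (T.adjoint (A.symm c') - d')
  have hl' : ∀ μ, ⟪A.symm (T l), T μ⟫_ℝ = ⟪A.symm c', T μ⟫_ℝ - d μ := fun μ => by
    rw [← hS, ← hs, ← hsco.continuousLinearEquivOfBilin_apply, hl, inner_sub_left, hd',
      ContinuousLinearMap.adjoint_inner_left]
  -- existence is stated separately, so that uniqueness can treat the solution as arbitrary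
  have hex : ∃ p : X × Q, (∀ v : X, a p.1 v + b v p.2 = c v) ∧ (∀ μ : Q, b p.1 μ = d μ) := by
    refine ⟨(A.symm (c' - T l), l), fun v => ?_, fun μ => ?_⟩
    · rw [← hA, A.apply_symm_apply, inner_sub_left, hc', hT]
      ring
    · rw [← hT, real_inner_comm, map_sub, inner_sub_left, hl']
      ring
  obtain ⟨⟨u₂, l₂⟩, h3, h4⟩ := hex
  refine ⟨(u₂, l₂), ⟨h3, h4⟩, ?_⟩
  rintro ⟨u₁, l₁⟩ ⟨h1, h2⟩
  dsimp only at h1 h2 h3 h4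
  have hz1 : ∀ v, a (u₁ - u₂) v + b v (l₁ - l₂) = 0 := fun v => by
    have := h1 v; have := h3 v
    simp only [map_sub, LinearMap.sub_apply]; linarith
  have hz2 : ∀ μ, b (u₁ - u₂) μ = 0 := fun μ => by
    simp only [map_sub, LinearMap.sub_apply, h2, h4, sub_self]
  have hw : u₁ - u₂ = 0 := by
    have h5 := hz1 (u₁ - u₂)
    rw [hz2, add_zero] at h5
    have h6 := hcoer (u₁ - u₂)
    rw [h5] at h6
    have h7 : ‖u₁ - u₂‖ ^ 2 ≤ 0 := nonpos_of_mul_nonpos_right h6 hα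
    exact norm_eq_zero.mp (pow_eq_zero_iff two_ne_zero |>.mp (le_antisymm h7 (sq_nonneg _)))
  have hT0 : T (l₁ - l₂) = 0 := by
    refine inner_self_eq_zero (𝕜 := ℝ) |>.mp ?_
    rw [hT]
    have h5 := hz1 (T (l₁ - l₂))
    rwa [hw, map_zero, LinearMap.zero_apply, zero_add] at h5
  have hν : l₁ - l₂ = 0 := by
    have h5 := hTlow (l₁ - l₂)
    rw [hT0, norm_zero] at h5
    exact norm_le_zero_iff.mp (nonpos_of_mul_nonpos_right h5 hβ)
  rw [sub_eq_zero.mp hw, sub_eq_zero.mp hν]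
end

section
/- Let X and Q be real Hilbert spaces, and let a : X × X → ℝ and b : X × Q → ℝ be bilinear forms satisfying, for positive constants α, C, D, β: a(u,u) ≥ α‖u‖_X² for all u ∈ X; |a(u,v)| ≤ C‖u‖_X ‖v‖_X for all u,v ∈ X; |b(u,μ)| ≤ D‖u‖_X ‖μ‖_Q for all u ∈ X, μ ∈ Q; and sup_{v ∈ X, v ≠ 0} b(v,μ)/‖v‖_X ≥ β‖μ‖_Q for all μ ∈ Q. Then there exists a constant M > 0, depending only on α, C, D, β, such that whenever (u, λ) ∈ X × Q satisfies a(u,v) + b(v,λ) = c(v) for all v ∈ X and b(u,μ) = d(μ) for all μ ∈ Q, for continuous linear functionals c : X → ℝ and d : Q → ℝ, the stability estimate ‖u‖_X + ‖λ‖_Q ≤ M(‖c‖_{X*} + ‖d‖_{Q*}) holds. -/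
/-!
Testing the first equation with all `v` and using the inf-sup condition gives
`β ‖λ‖ ≤ ‖c‖ + C ‖u‖`. Testing with `v = u`, `μ = λ` and using coercivity gives
`α ‖u‖² ≤ c u - d λ ≤ ‖c‖ ‖u‖ + ‖d‖ ‖λ‖`. With `F = ‖c‖ + ‖d‖`, eliminating `‖λ‖` leaves
`α β ‖u‖² ≤ F ((β + C) ‖u‖ + F)`, a quadratic inequality which bounds `‖u‖`, and hence `‖λ‖`,
linearly in `F` (`norm_bound_of_quadratic`).
-/

/-- Either `x ≤ F`, or the term `F` on the right is at most `x` and a factor `x` cancels. -/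
lemma norm_bound_of_quadratic {p q x F : ℝ} (hp : 0 < p) (hq : 0 < q) (hF : 0 ≤ F)
    (h : p * x ^ 2 ≤ F * (q * x + F)) : x ≤ ((q + 1) / p + 1) * F := by
  have hK : 0 ≤ (q + 1) / p * F := by positivity
  rcases le_or_gt x F with hx | hx
  · linarith
  · have hx0 : 0 < x := hF.trans_lt hx
    have h1 : p * x ≤ (q + 1) * F := by
      refine le_of_mul_le_mul_right ?_ hx0
      nlinarith [mul_le_mul_of_nonneg_left hx.le hF]
    have h2 : x ≤ (q + 1) / p * F := by
      rw [div_mul_eq_mul_div, le_div_iff₀ hp]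
      linarith
    linarith

/-- **Stability estimate for the saddle point problem.**
Under the relaxed Brezzi conditions with constants `α, C, D, β`, there exists a
constant `M > 0`, depending only on `α, C, D, β`, such that every solution `(u, λ)`
of the saddle point problem with data `c, d` satisfies
`‖u‖ + ‖λ‖ ≤ M (‖c‖ + ‖d‖)`. -/
theorem saddle_point_stability (α C D β : ℝ)
    (hα : 0 < α) (hC : 0 < C) (hD : 0 < D) (hβ : 0 < β) :
    ∃ M : ℝ, 0 < M ∧
      ∀ (X Q : Type) [NormedAddCommGroup X] [InnerProductSpace ℝ X]
        [CompleteSpace X] [NormedAddCommGroup Q] [InnerProductSpace ℝ Q]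
        [CompleteSpace Q]
        (a : X →ₗ[ℝ] X →ₗ[ℝ] ℝ) (b : X →ₗ[ℝ] Q →ₗ[ℝ] ℝ),
        (∀ u : X, α * ‖u‖ ^ 2 ≤ a u u) →
        (∀ u v : X, |a u v| ≤ C * ‖u‖ * ‖v‖) →
        (∀ (u : X) (μ : Q), |b u μ| ≤ D * ‖u‖ * ‖μ‖) →
        (∀ μ : Q, β * ‖μ‖ ≤ sSup {r : ℝ | ∃ v : X, v ≠ 0 ∧ r = b v μ / ‖v‖}) →
        ∀ (c : X →L[ℝ] ℝ) (d : Q →L[ℝ] ℝ) (u : X) (lam : Q),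
          (∀ v : X, a u v + b v lam = c v) →
          (∀ μ : Q, b u μ = d μ) →
          ‖u‖ + ‖lam‖ ≤ M * (‖c‖ + ‖d‖) := by
  obtain ⟨K, hK⟩ : ∃ K, K = (β + C + 1) / (α * β) + 1 := ⟨_, rfl⟩
  have hK0 : 0 < K := by rw [hK]; positivity
  refine ⟨K + (1 + C * K) / β, by positivity, ?_⟩
  intro X Q _ _ _ _ _ _ a b hcoer ha hb hinfsup c d u lam h1 h2
  have hc : ∀ v, |c v| ≤ ‖c‖ * ‖v‖ := fun v => c.le_opNorm v
  have hd : ∀ μ, |d μ| ≤ ‖d‖ * ‖μ‖ := fun μ => d.le_opNorm μ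
  have hy : β * ‖lam‖ ≤ ‖c‖ + C * ‖u‖ := by
    refine (hinfsup lam).trans (Real.sSup_le ?_ (by positivity))
    rintro r ⟨v, hv, rfl⟩
    rw [div_le_iff₀ (norm_pos_iff.mpr hv)]
    linarith [h1 v, (abs_le.mp (ha u v)).1, (abs_le.mp (hc v)).2]
  have hx : α * ‖u‖ ^ 2 ≤ ‖c‖ * ‖u‖ + ‖d‖ * ‖lam‖ := by
    linarith [hcoer u, h1 u, h2 lam, (abs_le.mp (hc u)).2, (abs_le.mp (hd lam)).1]
  have hc0 := norm_nonneg c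
  have hd0 := norm_nonneg d
  have hu0 := norm_nonneg u
  have hl0 := norm_nonneg lam
  obtain ⟨F, hF⟩ : ∃ F, F = ‖c‖ + ‖d‖ := ⟨_, rfl⟩
  have hF0 : 0 ≤ F := by linarith
  rw [← hF]
  have hyF : β * ‖lam‖ ≤ F + C * ‖u‖ := by linarith
  have hxF : α * ‖u‖ ^ 2 ≤ F * (‖u‖ + ‖lam‖) := by
    rw [hF]
    nlinarith [mul_nonneg hd0 hu0, mul_nonneg hc0 hl0]
  have hquad : α * β * ‖u‖ ^ 2 ≤ F * ((β + C) * ‖u‖ + F) := by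
    linarith [mul_le_mul_of_nonneg_left hxF hβ.le, mul_le_mul_of_nonneg_left hyF hF0]
  have hu : ‖u‖ ≤ K * F := by
    rw [hK]
    exact norm_bound_of_quadratic (by positivity) (by positivity) hF0 hquad
  have hl : ‖lam‖ ≤ (1 + C * K) / β * F := by
    rw [div_mul_eq_mul_div, le_div_iff₀ hβ]
    linarith [mul_le_mul_of_nonneg_left hu hC.le]
  linarith
end

section
/- Let X and Q be real Hilbert spaces, and let a : X × X → ℝ and b : X × Q → ℝ be bilinear forms satisfying, for positive constants α, C, D: a(u,u) ≥ α‖u‖_X² for all u ∈ X; |a(u,v)| ≤ C‖u‖_X ‖v‖_X for all u,v ∈ X; and |b(u,μ)| ≤ D‖u‖_X ‖μ‖_Q for all u ∈ X, μ ∈ Q. Let X_h ⊆ X and Q_h ⊆ Q be closed linear subspaces, and suppose there exists a constant β_h > 0 such that sup_{v_h ∈ X_h, v_h ≠ 0} b(v_h, μ_h)/‖v_h‖_X ≥ β_h ‖μ_h‖_Q for all μ_h ∈ Q_h. Then for every pair of continuous linear functionals c : X → ℝ and d : Q → ℝ there exists a unique pair (u_h, λ_h) ∈ X_h × Q_h such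 that a(u_h, v_h) + b(v_h, λ_h) = c(v_h) for all v_h ∈ X_h and b(u_h, μ_h) = d(μ_h) for all μ_h ∈ Q_h. -/
/-!
Let `V` and `M` be the subspaces `Xh` and `Qh`, which are Hilbert spaces because they are closed.
By the Riesz representation theorem the discrete problem becomes
`A u + T l = f`, `T† u = g`, where `⟪A u, v⟫ = a u v` and `⟪T μ, v⟫ = b v μ`.
Coercivity makes `A` invertible (Lax–Milgram) and the inf-sup condition says `βh * ‖μ‖ ≤ ‖T μ‖`.
Eliminating `u = A⁻¹ (f - T l)` leaves the Schur complement equation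
`T† A⁻¹ T l = T† A⁻¹ f - g`. The operator `T† A⁻¹ T` is coercive: with `v = A⁻¹ T l`,
`⟪T† A⁻¹ T l, l⟫ = ⟪v, A v⟫ ≥ α ‖v‖²`, while `βh ‖l‖ ≤ ‖T l‖ = ‖A v‖ ≤ C ‖v‖`.
A second use of Lax–Milgram determines `l`, hence `u`
(`existsUnique_saddle_of_coercive`).
-/

open scoped InnerProductSpace

/-- Lax–Milgram in operator form. -/
lemma exists_equiv_of_coercive {V : Type*} [NormedAddCommGroup V] [InnerProductSpace ℝ V]
    [CompleteSpace V] (S : V →L[ℝ] V) (κ : ℝ) (hκ : 0 < κ)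
    (hS : ∀ v, κ * ‖v‖ ^ 2 ≤ ⟪S v, v⟫_ℝ) : ∃ E : V ≃L[ℝ] V, ∀ v, E v = S v := by
  let B : V →L[ℝ] V →L[ℝ] ℝ := (innerSL ℝ).comp S
  have hB : IsCoercive B := ⟨κ, hκ, fun v => by
    have := hS v
    simp only [B, ContinuousLinearMap.comp_apply, innerSL_apply_apply]
    nlinarith⟩
  refine ⟨hB.continuousLinearEquivOfBilin, fun v => ?_⟩
  refine ext_inner_right ℝ fun w => ?_
  rw [hB.continuousLinearEquivOfBilin_apply]
  simp [B]

/-- The saddle point problem in operator form, solved through its Schur complement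
`T† A⁻¹ T`. -/
lemma existsUnique_saddle_of_coercive {V M : Type*}
    [NormedAddCommGroup V] [InnerProductSpace ℝ V] [CompleteSpace V]
    [NormedAddCommGroup M] [InnerProductSpace ℝ M] [CompleteSpace M]
    (A : V →L[ℝ] V) (T : M →L[ℝ] V) (α C β : ℝ) (hα : 0 < α) (hC : 0 < C) (hβ : 0 < β)
    (hA : ∀ v, α * ‖v‖ ^ 2 ≤ ⟪A v, v⟫_ℝ) (hAC : ∀ v, ‖A v‖ ≤ C * ‖v‖)
    (hT : ∀ μ, β * ‖μ‖ ≤ ‖T μ‖) (f : V) (g : M) :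
    ∃! p : V × M, A p.1 + T p.2 = f ∧ T.adjoint p.1 = g := by
  obtain ⟨E, hE⟩ := exists_equiv_of_coercive A α hα hA
  let S : M →L[ℝ] M := T.adjoint.comp ((E.symm : V →L[ℝ] V).comp T)
  have hSdef : ∀ l, S l = T.adjoint (E.symm (T l)) := fun l => rfl
  obtain ⟨F, hF⟩ := exists_equiv_of_coercive S (α * (β / C) ^ 2) (by positivity) (by
    intro l
    have hAv : A (E.symm (T l)) = T l := by rw [← hE, E.apply_symm_apply]
    have hin : ⟪S l, l⟫_ℝ = ⟪A (E.symm (T l)), E.symm (T l)⟫_ℝ := by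
      rw [hSdef, ContinuousLinearMap.adjoint_inner_left, hAv, real_inner_comm]
    have hle : β / C * ‖l‖ ≤ ‖E.symm (T l)‖ := by
      have h1 := hT l
      have h2 := hAC (E.symm (T l))
      rw [hAv] at h2
      rw [div_mul_eq_mul_div, div_le_iff₀ hC]
      linarith
    have hsq : (β / C * ‖l‖) ^ 2 ≤ ‖E.symm (T l)‖ ^ 2 := by gcongr
    rw [hin]
    calc α * (β / C) ^ 2 * ‖l‖ ^ 2 = α * (β / C * ‖l‖) ^ 2 := by ring
      _ ≤ α * ‖E.symm (T l)‖ ^ 2 := by gcongr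
      _ ≤ _ := hA _)
  have hel : ∀ u l, A u + T l = f ↔ u = E.symm (f - T l) := by
    intro u l
    rw [← hE, E.eq_symm_apply, eq_sub_iff_add_eq]
  have hschur : ∀ l, T.adjoint (E.symm (f - T l)) = g ↔
      l = F.symm (T.adjoint (E.symm f) - g) := by
    intro l
    rw [F.eq_symm_apply, hF, hSdef, map_sub, map_sub, sub_eq_iff_eq_add, eq_sub_iff_add_eq,
      add_comm g, eq_comm]
  refine ⟨(E.symm (f - T (F.symm (T.adjoint (E.symm f) - g))),
    F.symm (T.adjoint (E.symm f) - g)), ⟨(hel _ _).2 rfl, (hschur _).2 rfl⟩, ?_⟩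
  rintro ⟨u, l⟩ ⟨h1, h2⟩
  have hu := (hel u l).1 h1
  have hl := (hschur l).1 (hu ▸ h2)
  rw [hu, hl]


/-- **Well-posedness of the conforming Galerkin discretization of the saddle point
problem.**  Let `a` be a coercive and bounded bilinear form on a real Hilbert space
`X`, and `b` a bounded bilinear form on `X × Q`.  Let `X_h ⊆ X` and `Q_h ⊆ Q` be
closed subspaces such that the discrete inf-sup condition holds with constant
`β_h > 0`.  Then for all continuous linear functionals `c : X → ℝ`, `d : Q → ℝ`
the discrete saddle point problem has a unique solution `(u_h, λ_h) ∈ X_h × Q_h`. -/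
theorem discrete_saddle_point_wellposed
    {X Q : Type*}
    [NormedAddCommGroup X] [InnerProductSpace ℝ X] [CompleteSpace X]
    [NormedAddCommGroup Q] [InnerProductSpace ℝ Q] [CompleteSpace Q]
    (a : X →ₗ[ℝ] X →ₗ[ℝ] ℝ) (b : X →ₗ[ℝ] Q →ₗ[ℝ] ℝ)
    (α C D : ℝ) (hα : 0 < α) (hC : 0 < C) (hD : 0 < D)
    (hcoer : ∀ u : X, α * ‖u‖ ^ 2 ≤ a u u)
    (habd : ∀ u v : X, |a u v| ≤ C * ‖u‖ * ‖v‖)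
    (hbbd : ∀ (u : X) (μ : Q), |b u μ| ≤ D * ‖u‖ * ‖μ‖)
    (Xh : Submodule ℝ X) (Qh : Submodule ℝ Q)
    (hXh : IsClosed (Xh : Set X)) (hQh : IsClosed (Qh : Set Q))
    (βh : ℝ) (hβh : 0 < βh)
    (hinfsup : ∀ μh ∈ Qh,
      βh * ‖μh‖ ≤ sSup {r : ℝ | ∃ vh ∈ Xh, vh ≠ 0 ∧ r = b vh μh / ‖vh‖})
    (c : X →L[ℝ] ℝ) (d : Q →L[ℝ] ℝ) :
    ∃! p : X × Q, p.1 ∈ Xh ∧ p.2 ∈ Qh ∧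
      (∀ vh ∈ Xh, a p.1 vh + b vh p.2 = c vh) ∧
      (∀ μh ∈ Qh, b p.1 μh = d μh) := by
  have : CompleteSpace Xh := hXh.completeSpace_coe
  have : CompleteSpace Qh := hQh.completeSpace_coe
  let aL : Xh →L[ℝ] Xh →L[ℝ] ℝ :=
    LinearMap.mkContinuous₂ (a.domRestrict₁₂ Xh Xh) C fun u v => habd u v
  let bL : Qh →L[ℝ] Xh →L[ℝ] ℝ :=
    LinearMap.mkContinuous₂ (b.domRestrict₁₂ Xh Qh).flip D fun μ v => by
      have := hbbd v μ
      rw [mul_right_comm] at this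
      exact this
  -- The inverse Riesz map, rebuilt as a linear map: Mathlib states it as conjugate-linear.
  let R : (Xh →L[ℝ] ℝ) →L[ℝ] Xh :=
    { toFun := (InnerProductSpace.toDual ℝ Xh).symm
      map_add' := fun φ ψ => map_add _ φ ψ
      map_smul' := fun r φ => by simp
      cont := (InnerProductSpace.toDual ℝ Xh).symm.continuous }
  have hR : ∀ φ v, ⟪R φ, v⟫_ℝ = φ v := fun φ v =>
    InnerProductSpace.toDual_symm_apply
  let A : Xh →L[ℝ] Xh := R.comp aL
  let T : Qh →L[ℝ] Xh := R.comp bL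
  have hA : ∀ u v : Xh, ⟪A u, v⟫_ℝ = a u v := fun u v => hR _ _
  have hT : ∀ (μ : Qh) (v : Xh), ⟪T μ, v⟫_ℝ = b v μ := fun μ v => hR _ _
  let f : Xh := R (c.comp Xh.subtypeL)
  have hf : ∀ v : Xh, ⟪f, v⟫_ℝ = c v := fun v => hR _ _
  let g : Qh := (InnerProductSpace.toDual ℝ Qh).symm (d.comp Qh.subtypeL)
  have hg : ∀ μ : Qh, ⟪g, μ⟫_ℝ = d μ := fun μ => InnerProductSpace.toDual_symm_apply
  have hAC : ∀ v, ‖A v‖ ≤ C * ‖v‖ := by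
    intro v
    -- Testing `A v` against itself gives `‖A v‖² ≤ C ‖v‖ ‖A v‖`.
    have h1 : ‖A v‖ * ‖A v‖ ≤ C * ‖v‖ * ‖A v‖ := by
      rw [← real_inner_self_eq_norm_mul_norm, hA]
      exact (le_abs_self _).trans (habd v (A v))
    rcases (norm_nonneg (A v)).eq_or_lt with h0 | h0
    · rw [← h0]; positivity
    · exact le_of_mul_le_mul_right h1 h0
  have hTβ : ∀ μ, βh * ‖μ‖ ≤ ‖T μ‖ := by
    intro μ
    refine (hinfsup μ μ.2).trans (Real.sSup_le ?_ (norm_nonneg _))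
    rintro r ⟨v, hv, hv0, rfl⟩
    rw [div_le_iff₀ (norm_pos_iff.2 hv0)]
    have := real_inner_le_norm (T μ) ⟨v, hv⟩
    rw [hT] at this
    exact this
  have hiff1 : ∀ (u : Xh) (l : Qh), A u + T l = f ↔ ∀ v ∈ Xh, a u v + b v l = c v := by
    intro u l
    constructor
    · intro h v hv
      have := congrArg (fun x => ⟪x, (⟨v, hv⟩ : Xh)⟫_ℝ) h
      simpa only [inner_add_left, hA, hT, hf] using this
    · intro h
      refine ext_inner_right ℝ fun v => ?_
      rw [inner_add_left, hA, hT, hf]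
      exact h v v.2
  have hadj : ∀ (u : Xh) (μ : Qh), ⟪T.adjoint u, μ⟫_ℝ = b u μ := by
    intro u μ
    rw [ContinuousLinearMap.adjoint_inner_left, real_inner_comm, hT]
  have hiff2 : ∀ u : Xh, T.adjoint u = g ↔ ∀ μ ∈ Qh, b u μ = d μ := by
    intro u
    constructor
    · intro h μ hμ
      have := congrArg (fun x => ⟪x, (⟨μ, hμ⟩ : Qh)⟫_ℝ) h
      simpa only [hadj, hg] using this
    · intro h
      refine ext_inner_right ℝ fun μ => ?_
      rw [hadj, hg]
      exact h μ μ.2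
  obtain ⟨⟨u, l⟩, ⟨h1, h2⟩, huniq⟩ := existsUnique_saddle_of_coercive A T α C βh hα hC hβh
    (fun v => by rw [hA]; exact hcoer v) hAC hTβ f g
  refine ⟨(u, l), ⟨u.2, l.2, (hiff1 u l).1 h1, (hiff2 u).1 h2⟩, ?_⟩
  rintro ⟨u', l'⟩ ⟨hu', hl', h1', h2'⟩
  have := huniq (⟨u', hu'⟩, ⟨l', hl'⟩) ⟨(hiff1 _ _).2 h1', (hiff2 _).2 h2'⟩
  rw [Prod.mk.injEq] at this
  rw [← this.1, ← this.2]
end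

section
/- Let X > 0 and Y > 0 be real numbers. For integers i ≥ 1 and j ≥ 0, define φ_{ij}(x,y) = sin(iπx/X)·(cos(2jπy/Y) + sin(2jπy/Y)). Let u : ℝ² → ℝ be integrable on the rectangle (0,X) × (0,Y), and define its transverse average ū(x) = (1/Y) ∫₀^Y u(x,y) dy. Then the following inequality of (possibly infinite) sums of nonnegative terms holds: Y² · ∑_{i≥1} (1 + (iπ/X)²)^{1/2} · (∫₀^X ū(x) sin(iπx/X) dx)² ≤ ∑_{i≥1} ∑_{j≥0} (1 + (iπ/X)² + (2jπ/Y)²)^{1/2} · (∫₀^X ∫₀^Y u(x,y) φ_{ij}(x,y) dy dx)². In particular, if the right-hand side (the spectrally defined squared H^{1/2}_{00}-norm of u on the rectangle) is finite, then the left-hand side (Y² times the spectrally defined squared H^{1/2}_{00}-norm of ū on (0,X)) is finite. -/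
/-!
Since `φ_{i0}(x,y) = sin(iπx/X)` does not depend on `y`, the coefficient of `u` on `φ_{i0}` is `Y`
times the coefficient of the transverse average on `sin(iπx/X)`, and the two eigenvalues agree.
Hence `Y²` times the `i`-th term on the left is the `j = 0` term of the inner sum on the right,
and the remaining terms with `j ≥ 1` are nonnegative.
-/

open Real MeasureTheory intervalIntegral

/-- The eigenfunctions `φ_{ij}(x,y) = sin(iπx/X)(cos(2jπy/Y) + sin(2jπy/Y))`
of the Laplacian on the rectangle `(0,X) × (0,Y)` with Dirichlet conditions in `x`
and periodic conditions in `y`. -/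
noncomputable def phiRect (X Y : ℝ) (i j : ℕ) (x y : ℝ) : ℝ :=
  Real.sin ((i : ℝ) * π * x / X) *
    (Real.cos (2 * (j : ℝ) * π * y / Y) + Real.sin (2 * (j : ℝ) * π * y / Y))

/-- **Spectral `H^{1/2}_{00}`-bound for the transverse average.**
For `u` integrable on the rectangle `(0,X) × (0,Y)`, with transverse average
`ū(x) = (1/Y)∫₀^Y u(x,y) dy`, the quantity `Y²` times the spectrally defined
squared `H^{1/2}_{00}`-norm of `ū` on `(0,X)` is bounded by the spectrally
defined squared `H^{1/2}_{00}`-norm of `u` on the rectangle (as an inequality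
of sums of nonnegative terms in the extended reals).  In particular, if the
right-hand side is finite, so is the left-hand side. -/
theorem spectral_norm_transverse_average (X Y : ℝ) (hX : 0 < X) (hY : 0 < Y)
    (u : ℝ × ℝ → ℝ) (hu : IntegrableOn u (Set.Ioo 0 X ×ˢ Set.Ioo 0 Y)) :
    (ENNReal.ofReal (Y ^ 2) *
        ∑' i : ℕ,
          ENNReal.ofReal
            (Real.sqrt (1 + (((i : ℝ) + 1) * π / X) ^ 2) *
              (∫ x in (0 : ℝ)..X,
                  ((1 / Y) * ∫ y in (0 : ℝ)..Y, u (x, y)) *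
                    Real.sin (((i : ℝ) + 1) * π * x / X)) ^ 2))
      ≤ ∑' i : ℕ, ∑' j : ℕ,
          ENNReal.ofReal
            (Real.sqrt (1 + (((i : ℝ) + 1) * π / X) ^ 2 + (2 * (j : ℝ) * π / Y) ^ 2) *
              (∫ x in (0 : ℝ)..X,
                  ∫ y in (0 : ℝ)..Y, u (x, y) * phiRect X Y (i + 1) j x y) ^ 2) := by
  rw [← ENNReal.tsum_mul_left]
  refine ENNReal.tsum_le_tsum fun i => ?_
  refine le_trans (le_of_eq ?_) (ENNReal.le_tsum 0)
  rw [← ENNReal.ofReal_mul (sq_nonneg Y)]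
  -- Pulling constants out of Bochner integrals needs no integrability: without it,
  -- both sides are zero by convention.
  have hmode : (∫ x in (0 : ℝ)..X, ∫ y in (0 : ℝ)..Y, u (x, y) * phiRect X Y (i + 1) 0 x y)
      = Y * ∫ x in (0 : ℝ)..X, ((1 / Y) * ∫ y in (0 : ℝ)..Y, u (x, y)) *
          Real.sin (((i : ℝ) + 1) * π * x / X) := by
    rw [← intervalIntegral.integral_const_mul]
    congr 1
    funext x
    simp only [phiRect, Nat.cast_add, Nat.cast_one, Nat.cast_zero, mul_zero, zero_mul, zero_div,
      Real.cos_zero, Real.sin_zero, add_zero, mul_one, intervalIntegral.integral_mul_const]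
    field_simp
  rw [hmode]
  congr 1
  simp only [Nat.cast_zero, mul_zero, zero_mul, zero_div, ne_eq, OfNat.ofNat_ne_zero,
    not_false_eq_true, zero_pow, add_zero]
  ring
end
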